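/- arXiv:2411.02918 — 2 statements merged into one kernel-verified Lean document; each statement's English description precedes it below -/
import Mathlib

section
/- Let T be a tree of order n with n ≥ 3. Then φ(T) = ⌈n/2⌉ + 1 if and only if n is even and T is isomorphic to T(n/2, (n-2)/2), or n is odd and T is isomorphic to T((n-1)/2, (n-1)/2) or to T((n+1)/2, (n-3)/2). -/
open SimpleGraph

/-- A dissociation set: a set of vertices inducing a subgraph of maximum degree at most 1,
i.e., every vertex of `S` has at most one neighbour inside `S`. -/
def IsDissoc {V : Type*} (G : SimpleGraph V) (S : Set V) : Prop :=
  ∀ v ∈ S, {u | u ∈ S ∧ G.Adj v u}.Subsingleton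

/-- A maximal dissociation set: a dissociation set not properly contained in another one. -/
def IsMaxDissoc {V : Type*} (G : SimpleGraph V) (S : Set V) : Prop :=
  IsDissoc G S ∧ ∀ T : Set V, IsDissoc G T → S ⊆ T → S = T

/-- `phi G` is the number of maximal dissociation sets of `G`. -/
noncomputable def phi {V : Type*} (G : SimpleGraph V) : ℕ :=
  {S : Set V | IsMaxDissoc G S}.ncard

/-- The number of maximal dissociation sets of `G` not containing `u`. -/
noncomputable def phiNot {V : Type*} (G : SimpleGraph V) (u : V) : ℕ :=
  {S : Set V | IsMaxDissoc G S ∧ u ∉ S}.ncard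

/-- The number of maximal dissociation sets `S` of `G` with `u ∈ S` and
`u` of degree 0 in the subgraph induced by `S`. -/
noncomputable def phi0 {V : Type*} (G : SimpleGraph V) (u : V) : ℕ :=
  {S : Set V | IsMaxDissoc G S ∧ u ∈ S ∧ ∀ x ∈ S, ¬ G.Adj u x}.ncard

/-- The number of maximal dissociation sets `S` of `G` with `u ∈ S` and
`u` of degree 1 in the subgraph induced by `S`. -/
noncomputable def phi1 {V : Type*} (G : SimpleGraph V) (u : V) : ℕ :=
  {S : Set V | IsMaxDissoc G S ∧ u ∈ S ∧ ∃! x, x ∈ S ∧ G.Adj u x}.ncard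

/-- A unicyclic graph: a connected graph whose number of edges equals its number of vertices
(equivalently, a connected graph with exactly one cycle). -/
def IsUnicyclic {V : Type*} [Fintype V] (G : SimpleGraph V) : Prop :=
  G.Connected ∧ G.edgeSet.ncard = Fintype.card V

/-- The tree `T(p,q)` (for `q ≤ p`): obtained from the star `K_{1,p}` by subdividing
exactly `q` of its edges.  The centre is `Sum.inl ()`, the `p` neighbours of the centre are
`Sum.inr (Sum.inl i)`, and for `j < q` the vertex `Sum.inr (Sum.inr j)` is the subdivision
pendant attached to the `j`-th neighbour.  It has `1 + p + q` vertices. -/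
def treeT (p q : ℕ) (h : q ≤ p) : SimpleGraph (Unit ⊕ Fin p ⊕ Fin q) :=
  SimpleGraph.fromRel fun a b =>
    (∃ i : Fin p, a = Sum.inl () ∧ b = Sum.inr (Sum.inl i)) ∨
    (∃ j : Fin q, a = Sum.inr (Sum.inl (Fin.castLE h j)) ∧ b = Sum.inr (Sum.inr j))

/-- The unicyclic graph `U(p,q)` (for `q ≤ p`): obtained by identifying one vertex of the
triangle `K₃` with the centre of `T(p,q)`.  The centre is `Sum.inl ()`, the two other triangle
vertices are `Sum.inr (Sum.inl 0)` and `Sum.inr (Sum.inl 1)`, and the copy of `T(p,q)` sits on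
the remaining vertices.  It has `3 + p + q` vertices. -/
def graphU (p q : ℕ) (h : q ≤ p) : SimpleGraph (Unit ⊕ Fin 2 ⊕ Fin p ⊕ Fin q) :=
  SimpleGraph.fromRel fun a b =>
    (a = Sum.inl () ∧ b = Sum.inr (Sum.inl 0)) ∨
    (a = Sum.inl () ∧ b = Sum.inr (Sum.inl 1)) ∨
    (a = Sum.inr (Sum.inl 0) ∧ b = Sum.inr (Sum.inl 1)) ∨
    (∃ i : Fin p, a = Sum.inl () ∧ b = Sum.inr (Sum.inr (Sum.inl i))) ∨
    (∃ j : Fin q, a = Sum.inr (Sum.inr (Sum.inl (Fin.castLE h j))) ∧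
      b = Sum.inr (Sum.inr (Sum.inr j)))

/-- The unicyclic graph obtained from the cycle `C_r` by attaching one pendant vertex
`Sum.inr j` to the cycle vertex `Sum.inl (f j)` for each `j : Fin t`.  For injective `f`
this is a member of the class `𝒰_{r,t}`. -/
def graphUrtF (r t : ℕ) (f : Fin t → Fin r) : SimpleGraph (Fin r ⊕ Fin t) :=
  SimpleGraph.fromRel fun a b =>
    (∃ i j : Fin r, a = Sum.inl i ∧ b = Sum.inl j ∧ (cycleGraph r).Adj i j) ∨
    (∃ j : Fin t, a = Sum.inl (f j) ∧ b = Sum.inr j)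

/-- The canonical member `U_{r,t}` of `𝒰_{r,t}` (for `t ≤ r`): the cycle `C_r` with one
pendant vertex attached to each of its first `t` vertices. -/
def graphUrt (r t : ℕ) (h : t ≤ r) : SimpleGraph (Fin r ⊕ Fin t) :=
  graphUrtF r t (Fin.castLE h)

/-- A caterpillar: a tree in which deleting all vertices of degree 1 leaves a path. -/
def IsCaterpillar {V : Type*} [Fintype V] (G : SimpleGraph V) : Prop :=
  G.IsTree ∧ ∃ m : ℕ,
    Nonempty ((G.induce {v | 2 ≤ (G.neighborSet v).ncard}) ≃g SimpleGraph.pathGraph m)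

/-- The graph `G₁` obtained from `U` by adding `k` new pendant vertices
`v₁ = Sum.inr 0, …, v_k = Sum.inr (k-1)`, each adjacent to `w`. -/
def addPendants {V : Type*} (U : SimpleGraph V) (w : V) (k : ℕ) : SimpleGraph (V ⊕ Fin k) :=
  SimpleGraph.fromRel fun a b =>
    (∃ x y, a = Sum.inl x ∧ b = Sum.inl y ∧ U.Adj x y) ∨
    (∃ j : Fin k, a = Sum.inl w ∧ b = Sum.inr j)

/-- The graph `G₂ = G₁ - w v_k + v₁ v_k`: obtained from `U` by attaching the pendant vertices
`v₁, …, v_{k-1}` to `w` and the vertex `v_k` to `v₁`. -/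
def swapPendant {V : Type*} (U : SimpleGraph V) (w : V) (k : ℕ) : SimpleGraph (V ⊕ Fin k) :=
  SimpleGraph.fromRel fun a b =>
    (∃ x y, a = Sum.inl x ∧ b = Sum.inl y ∧ U.Adj x y) ∨
    (∃ j : Fin k, j.val < k - 1 ∧ a = Sum.inl w ∧ b = Sum.inr j) ∨
    (∃ j₀ j₁ : Fin k, j₀.val = 0 ∧ j₁.val = k - 1 ∧ a = Sum.inr j₀ ∧ b = Sum.inr j₁)

/-- The graph obtained from `H` by attaching a pendant path of length 2 at `w`:
two new vertices `v = Sum.inr 0` and `u = Sum.inr 1` with edges `w v` and `v u`. -/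
def addPath2 {V : Type*} (H : SimpleGraph V) (w : V) : SimpleGraph (V ⊕ Fin 2) :=
  SimpleGraph.fromRel fun a b =>
    (∃ x y, a = Sum.inl x ∧ b = Sum.inl y ∧ H.Adj x y) ∨
    (a = Sum.inl w ∧ b = Sum.inr 0) ∨
    (a = Sum.inr 0 ∧ b = Sum.inr 1)

/-
Deleting the centre of `T(p, q)` leaves a dissociation set, and the `T(p, q)` are exactly the trees
with such a vertex.  If `c` is such a vertex of a graph `G`, the maximal dissociation sets of `G`
are the complement of `c`, one set for each edge at `c`, and possibly the set of non-neighbours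
of `c`; for `T(p, q)` this gives `p + 1`, plus one if `p = q`, which is `⌈n/2⌉ + 1` if `p ≤ q + 2`
and larger otherwise.

Every other tree `T` has strictly more than `⌈n/2⌉ + 1` maximal dissociation sets, by induction
on `n`.  An end of a longest path yields two leaves with a common neighbour or a leaf whose
neighbour has degree two; delete one leaf in the first case, the leaf and its neighbour in the
second.  Every maximal dissociation set of the remaining tree `H` extends to one of `T`, and these
extensions miss a maximal dissociation set of `T` through both ends of the edge at which `H` was
attached, so `φ(H) + 1 ≤ φ(T)`, while `⌈n/2⌉` drops by at most one.  If `H` is itself some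
`T(p, q)`, with centre `c`, and was attached at `w`, the extensions also miss the complement of
`{c, w}`.
-/

section Dissociation

variable {V W : Type*} {G : SimpleGraph V} {H : SimpleGraph W} {S S' : Set V}

lemma isDissoc_iff :
    IsDissoc G S ↔ ∀ v ∈ S, ∀ a ∈ S, ∀ b ∈ S, G.Adj v a → G.Adj v b → a = b :=
  ⟨fun h v hv _ ha _ hb hva hvb => h v hv ⟨ha, hva⟩ ⟨hb, hvb⟩,
    fun h v hv _ ha _ hb => h v hv _ ha.1 _ hb.1 ha.2 hb.2⟩

lemma IsDissoc.eq_of_adj (h : IsDissoc G S) {v a b : V} (hv : v ∈ S) (ha : a ∈ S) (hb : b ∈ S)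
    (hva : G.Adj v a) (hvb : G.Adj v b) : a = b :=
  h v hv ⟨ha, hva⟩ ⟨hb, hvb⟩

lemma IsDissoc.mono (h : IsDissoc G S') (hS : S ⊆ S') : IsDissoc G S :=
  fun v hv => (h v (hS hv)).anti fun _ ha => ⟨hS ha.1, ha.2⟩

lemma IsDissoc.preimage (h : IsDissoc G S) (f : H ↪g G) : IsDissoc H (f ⁻¹' S) := by
  rw [isDissoc_iff]
  exact fun v hv a ha b hb hva hvb =>
    f.injective (h.eq_of_adj hv ha hb (f.map_adj_iff.2 hva) (f.map_adj_iff.2 hvb))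

lemma IsDissoc.image {S : Set W} (h : IsDissoc H S) (f : H ↪g G) : IsDissoc G (f '' S) := by
  rw [isDissoc_iff]
  rintro _ ⟨v, hv, rfl⟩ _ ⟨a, ha, rfl⟩ _ ⟨b, hb, rfl⟩ hva hvb
  rw [h.eq_of_adj hv ha hb (f.map_adj_iff.1 hva) (f.map_adj_iff.1 hvb)]

lemma isDissoc_of_encard_le_two (h : S.encard ≤ 2) : IsDissoc G S := by
  rw [isDissoc_iff]
  intro v hv a ha b hb hva hvb
  by_contra hab
  have hsub : ({v, a, b} : Set V) ⊆ S := by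
    rintro x (rfl | rfl | rfl) <;> assumption
  have h3 := (Set.encard_le_encard hsub).trans h
  rw [Set.encard_eq_three.2 ⟨v, a, b, hva.ne, hvb.ne, hab, rfl⟩] at h3
  exact absurd h3 (by decide)

lemma encard_pair_le_two (a b : V) : ({a, b} : Set V).encard ≤ 2 :=
  (Set.encard_insert_le {b} a).trans (by rw [Set.encard_singleton, one_add_one_eq_two])

lemma isDissoc_pair (a b : V) : IsDissoc G {a, b} :=
  isDissoc_of_encard_le_two (encard_pair_le_two a b)

lemma IsDissoc.isMaxDissoc (h : IsDissoc G S)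
    (hmax : ∀ S', IsDissoc G S' → S ⊆ S' → S' ⊆ S) : IsMaxDissoc G S :=
  ⟨h, fun S' hS' hle => hle.antisymm (hmax S' hS' hle)⟩

lemma IsDissoc.exists_isMaxDissoc_superset [Finite V] (h : IsDissoc G S) :
    ∃ S', S ⊆ S' ∧ IsMaxDissoc G S' := by
  obtain ⟨S', hle, hmax⟩ := (Set.toFinite {S : Set V | IsDissoc G S}).exists_le_maximal h
  exact ⟨S', hle, hmax.1.isMaxDissoc fun _ hR hSR => hmax.2 hR hSR⟩

lemma exists_isMaxDissoc_mem_mem [Finite V] (a b : V) :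
    ∃ S, IsMaxDissoc G S ∧ a ∈ S ∧ b ∈ S := by
  obtain ⟨S, hle, hS⟩ := (isDissoc_pair (G := G) a b).exists_isMaxDissoc_superset
  exact ⟨S, hS, hle (by simp), hle (by simp)⟩

lemma IsMaxDissoc.preimage_eq {A : Set W} (hA : IsMaxDissoc H A) (f : H ↪g G)
    (hS : IsDissoc G S) (h : f '' A ⊆ S) : f ⁻¹' S = A :=
  (hA.2 _ (hS.preimage f) (Set.image_subset_iff.1 h)).symm

lemma phi_add_ncard_le_of_forall_exists_preimage_eq [Finite V] (f : W → V) (F : Set (Set V))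
    (hF : ∀ S ∈ F, IsMaxDissoc G S)
    (h : ∀ A, IsMaxDissoc H A → ∃ B, IsMaxDissoc G B ∧ f ⁻¹' B = A ∧ B ∉ F) :
    phi H + F.ncard ≤ phi G := by
  choose! e he hef heF using h
  have hinj : Set.InjOn e {A | IsMaxDissoc H A} := fun A hA B hB hAB => by
    rw [← hef A hA, ← hef B hB, hAB]
  have hdisj : Disjoint (e '' {A | IsMaxDissoc H A}) F := by
    rw [Set.disjoint_left]
    rintro _ ⟨A, hA, rfl⟩
    exact heF A hA
  calc phi H + F.ncard = (e '' {A | IsMaxDissoc H A} ∪ F).ncard := by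
        rw [phi, ← hinj.ncard_image, Set.ncard_union_eq hdisj]
    _ ≤ phi G := Set.ncard_le_ncard (Set.union_subset (Set.image_subset_iff.2 he) hF)

lemma phi_le_of_embedding [Finite V] (f : H ↪g G) : phi H ≤ phi G := by
  refine le_of_eq_of_le (by simp)
    (phi_add_ncard_le_of_forall_exists_preimage_eq (G := G) (H := H) f ∅ (by simp) fun A hA => ?_)
  obtain ⟨B, hle, hB⟩ := (hA.1.image f).exists_isMaxDissoc_superset
  exact ⟨B, hB, hA.preimage_eq f hB.1 hle, Set.notMem_empty B⟩

lemma phi_congr [Finite V] [Finite W] (e : G ≃g H) : phi G = phi H :=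
  (phi_le_of_embedding e.toEmbedding).antisymm (phi_le_of_embedding e.symm.toEmbedding)

end Dissociation

section Center

variable {V : Type*} {G : SimpleGraph V} {S : Set V} {a b c i : V}

/-- The vertices that can share a dissociation set with both ends of the edge `ab`; it bounds every
dissociation set in which `a` is matched to `b`. -/
def edgeCompatible (G : SimpleGraph V) (a b : V) : Set V :=
  {x | (G.Adj a x → x = b) ∧ (G.Adj b x → x = a)}

lemma left_mem_edgeCompatible : a ∈ edgeCompatible G a b := by
  simp [edgeCompatible]

lemma right_mem_edgeCompatible : b ∈ edgeCompatible G a b := by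
  simp [edgeCompatible]

lemma IsDissoc.subset_edgeCompatible (hS : IsDissoc G S) (ha : a ∈ S) (hb : b ∈ S)
    (hab : G.Adj a b) : S ⊆ edgeCompatible G a b := fun _ hx =>
  ⟨fun hax => hS.eq_of_adj ha hx hb hax hab, fun hbx => hS.eq_of_adj hb hx ha hbx hab.symm⟩

lemma IsDissoc.isDissoc_edgeCompatible (hc : IsDissoc G {c}ᶜ) :
    IsDissoc G (edgeCompatible G c i) := by
  rw [isDissoc_iff]
  rintro v ⟨hcv, hiv⟩ a ⟨hca, hia⟩ b ⟨hcb, hib⟩ hva hvb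
  by_cases hv : v = c
  · subst hv
    exact (hca hva).trans (hcb hvb).symm
  by_cases hvi : v = i
  · subst hvi
    exact (hia hva).trans (hib hvb).symm
  have hne {x} (hvx : G.Adj v x) : x ≠ c := by
    rintro rfl
    exact hvi (hcv hvx.symm)
  exact hc.eq_of_adj hv (hne hva) (hne hvb) hva hvb

lemma IsDissoc.isDissoc_compl_neighborSet (hc : IsDissoc G {c}ᶜ) :
    IsDissoc G (G.neighborSet c)ᶜ := by
  rw [isDissoc_iff]
  intro v hv a ha b hb hva hvb
  have hne {x y} (hy : y ∈ (G.neighborSet c)ᶜ) (hxy : G.Adj x y) : x ≠ c := by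
    rintro rfl
    exact hy hxy
  exact hc.eq_of_adj (hne ha hva) (hne hv hva.symm) (hne hv hvb.symm) hva hvb

lemma IsDissoc.isMaxDissoc_compl_singleton (hc : IsDissoc G {c}ᶜ) (hG : ¬ IsDissoc G Set.univ) :
    IsMaxDissoc G {c}ᶜ := by
  refine hc.isMaxDissoc fun S hS hle x hxS hxc => hG (hS.mono fun y _ => ?_)
  by_cases hy : y = c
  · exact hy.trans hxc.symm ▸ hxS
  · exact hle hy

lemma IsDissoc.isMaxDissoc_edgeCompatible (hc : IsDissoc G {c}ᶜ) (hci : G.Adj c i) :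
    IsMaxDissoc G (edgeCompatible G c i) :=
  hc.isDissoc_edgeCompatible.isMaxDissoc fun _ hS hle => hS.subset_edgeCompatible
    (hle left_mem_edgeCompatible) (hle right_mem_edgeCompatible) hci

lemma IsDissoc.isMaxDissoc_compl_neighborSet_iff (hc : IsDissoc G {c}ᶜ) :
    IsMaxDissoc G (G.neighborSet c)ᶜ ↔ ∀ i, G.Adj c i → ∃ x ≠ c, ¬ G.Adj c x ∧ G.Adj i x := by
  constructor
  · intro hmax i hci
    by_contra! hno
    have hle : (G.neighborSet c)ᶜ ⊆ edgeCompatible G c i := fun x hcx =>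
      ⟨fun h => (hcx h).elim, fun hix => by_contra fun hxc => hno x hxc hcx hix⟩
    have hi : i ∈ (G.neighborSet c)ᶜ :=
      hmax.2 _ hc.isDissoc_edgeCompatible hle ▸ right_mem_edgeCompatible
    exact hi hci
  · intro h
    refine hc.isDissoc_compl_neighborSet.isMaxDissoc fun S hS hle i hiS hci => ?_
    obtain ⟨x, hxc, hcx, hix⟩ := h i hci
    exact hxc (hS.eq_of_adj hiS (hle hcx) (hle G.irrefl) hix hci.symm)

lemma IsDissoc.isMaxDissoc_cases (hc : IsDissoc G {c}ᶜ) (hS : IsMaxDissoc G S) :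
    S = {c}ᶜ ∨ S ∈ edgeCompatible G c '' G.neighborSet c ∨ S = (G.neighborSet c)ᶜ := by
  by_cases hcS : c ∈ S
  · by_cases hi : ∃ i ∈ S, G.Adj c i
    · obtain ⟨i, hiS, hci⟩ := hi
      exact .inr (.inl ⟨i, hci, (hS.2 _ hc.isDissoc_edgeCompatible
        (hS.1.subset_edgeCompatible hcS hiS hci)).symm⟩)
    · exact .inr (.inr (hS.2 _ hc.isDissoc_compl_neighborSet fun x hx hcx => hi ⟨x, hx, hcx⟩))
  · exact .inl (hS.2 _ hc (Set.subset_compl_singleton_iff.2 hcS))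

lemma injOn_edgeCompatible : (G.neighborSet c).InjOn (edgeCompatible G c) := by
  intro i hi j _ hij
  have : i ∈ edgeCompatible G c j := hij ▸ right_mem_edgeCompatible
  exact this.1 hi

lemma ncard_insert_image_edgeCompatible [Finite V] :
    (insert {c}ᶜ (edgeCompatible G c '' G.neighborSet c)).ncard =
      (G.neighborSet c).ncard + 1 := by
  rw [Set.ncard_insert_of_notMem, injOn_edgeCompatible.ncard_image]
  rintro ⟨i, -, hi⟩
  have : c ∈ ({c}ᶜ : Set V) := hi ▸ left_mem_edgeCompatible
  exact this rfl

open scoped Classical in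
theorem IsDissoc.phi_eq_ncard_neighborSet_add [Finite V] (hc : IsDissoc G {c}ᶜ)
    (hG : ¬ IsDissoc G Set.univ) :
    phi G = (G.neighborSet c).ncard + 1 +
      if ∀ i, G.Adj c i → ∃ x ≠ c, ¬ G.Adj c x ∧ G.Adj i x then 1 else 0 := by
  let X : Set (Set V) := insert {c}ᶜ (edgeCompatible G c '' G.neighborSet c)
  have hX : ∀ S ∈ X, IsMaxDissoc G S := by
    rintro _ (rfl | ⟨i, hci, rfl⟩)
    exacts [hc.isMaxDissoc_compl_singleton hG, hc.isMaxDissoc_edgeCompatible hci]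
  have hcases : ∀ S, IsMaxDissoc G S → S = (G.neighborSet c)ᶜ ∨ S ∈ X := fun S hS => by
    rcases hc.isMaxDissoc_cases hS with h | h | h
    exacts [.inr (.inl h), .inr (.inr h), .inl h]
  rw [← ncard_insert_image_edgeCompatible, phi, ← hc.isMaxDissoc_compl_neighborSet_iff]
  split_ifs with hN
  · have hNX : (G.neighborSet c)ᶜ ∉ X := by
      rintro (h | ⟨i, hci, h⟩)
      · have : c ∈ ({c}ᶜ : Set V) := h ▸ G.irrefl
        exact this rfl
      · have : i ∈ (G.neighborSet c)ᶜ := h ▸ right_mem_edgeCompatible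
        exact this hci
    rw [← Set.ncard_insert_of_notMem hNX]
    congr 1
    ext S
    refine ⟨hcases S, ?_⟩
    rintro (rfl | hS)
    exacts [hN, hX S hS]
  · congr 1
    ext S
    exact ⟨fun hS => (hcases S hS).resolve_left fun h => hN (h ▸ hS), hX S⟩

end Center

section TreeT

variable {p q : ℕ} {h : q ≤ p}

lemma treeT_adj_center_neighbor (i : Fin p) :
    (treeT p q h).Adj (Sum.inl ()) (Sum.inr (Sum.inl i)) := by
  simp [treeT]

lemma treeT_not_adj_center_pendant (j : Fin q) :
    ¬ (treeT p q h).Adj (Sum.inl ()) (Sum.inr (Sum.inr j)) := by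
  simp [treeT]

lemma treeT_not_adj_neighbor_neighbor (i k : Fin p) :
    ¬ (treeT p q h).Adj (Sum.inr (Sum.inl i)) (Sum.inr (Sum.inl k)) := by
  simp [treeT]

lemma treeT_not_adj_pendant_pendant (j k : Fin q) :
    ¬ (treeT p q h).Adj (Sum.inr (Sum.inr j)) (Sum.inr (Sum.inr k)) := by
  simp [treeT]

lemma treeT_adj_neighbor_pendant_iff (i : Fin p) (j : Fin q) :
    (treeT p q h).Adj (Sum.inr (Sum.inl i)) (Sum.inr (Sum.inr j)) ↔ i = Fin.castLE h j := by
  simp [treeT]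

lemma treeT_neighborSet_center :
    (treeT p q h).neighborSet (Sum.inl ()) = Set.range fun i => Sum.inr (Sum.inl i) := by
  ext (_ | i | j)
  · simp
  · simpa using treeT_adj_center_neighbor i
  · simpa using treeT_not_adj_center_pendant j

lemma isDissoc_treeT_compl_center : IsDissoc (treeT p q h) {Sum.inl ()}ᶜ := by
  rw [isDissoc_iff]
  rintro (_ | i | j) hv (_ | a | a) ha (_ | b | b) hb hva hvb <;>
    grind [treeT_not_adj_neighbor_neighbor, treeT_not_adj_pendant_pendant,
      treeT_adj_neighbor_pendant_iff, (treeT p q h).adj_comm, Fin.castLE_injective]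

lemma not_isDissoc_treeT_univ (hpq : 2 ≤ p + q) : ¬ IsDissoc (treeT p q h) Set.univ := by
  intro hd
  by_cases hp : 2 ≤ p
  · have h01 := hd.eq_of_adj trivial trivial trivial
      (treeT_adj_center_neighbor ⟨0, by omega⟩) (treeT_adj_center_neighbor ⟨1, hp⟩)
    simp at h01
  · have hcenter := hd.eq_of_adj trivial trivial trivial
      (treeT_adj_center_neighbor _).symm
      ((treeT_adj_neighbor_pendant_iff _ ⟨0, by omega⟩).2 rfl)
    simp at hcenter

lemma treeT_forall_exists_pendant_iff :
    (∀ i, (treeT p q h).Adj (Sum.inl ()) i →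
      ∃ x ≠ Sum.inl (), ¬ (treeT p q h).Adj (Sum.inl ()) x ∧ (treeT p q h).Adj i x) ↔ p = q := by
  constructor
  · intro hpend
    have hsurj : Function.Surjective (Fin.castLE h) := fun i => by
      obtain ⟨_ | k | j, hne, hcx, hix⟩ := hpend _ (treeT_adj_center_neighbor i)
      · exact (hne rfl).elim
      · exact (hcx (treeT_adj_center_neighbor k)).elim
      · exact ⟨j, ((treeT_adj_neighbor_pendant_iff i j).1 hix).symm⟩
    exact (by simpa using Fintype.card_le_of_surjective _ hsurj : p ≤ q).antisymm h
  · rintro rfl (_ | i | j) hci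
    · exact ((treeT p p h).irrefl hci).elim
    · exact ⟨Sum.inr (Sum.inr i), by simp, treeT_not_adj_center_pendant i,
        (treeT_adj_neighbor_pendant_iff i i).2 rfl⟩
    · exact (treeT_not_adj_center_pendant j hci).elim

lemma phi_treeT (hpq : 2 ≤ p + q) : phi (treeT p q h) = p + 1 + if p = q then 1 else 0 := by
  have hinj : Function.Injective fun i : Fin p => (Sum.inr (Sum.inl i) : Unit ⊕ Fin p ⊕ Fin q) :=
    Sum.inr_injective.comp Sum.inl_injective
  rw [isDissoc_treeT_compl_center.phi_eq_ncard_neighborSet_add (not_isDissoc_treeT_univ hpq),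
    treeT_neighborSet_center, Set.ncard_range_of_injective hinj, Nat.card_fin]
  simp only [treeT_forall_exists_pendant_iff]

lemma natCard_eq_of_iso_treeT {V : Type*} {T : SimpleGraph V} (e : T ≃g treeT p q h) :
    Nat.card V = 1 + p + q := by
  rw [Nat.card_congr e.toEquiv]
  simp [add_assoc]

end TreeT

section Classification

variable {V : Type*} {T : SimpleGraph V} {c : V}

lemma exists_equiv_equiv_castLE {α β : Type*} [Finite β] (f : α ↪ β) :
    ∃ (p q : ℕ) (h : q ≤ p) (eα : Fin q ≃ α) (eβ : Fin p ≃ β),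
      ∀ j, eβ (Fin.castLE h j) = f (eα j) := by
  have : Finite α := .of_injective f f.injective
  obtain ⟨q, ⟨eα⟩⟩ := Finite.exists_equiv_fin α
  obtain ⟨p, ⟨eβ⟩⟩ := Finite.exists_equiv_fin β
  let g : Fin q ↪ Fin p := eα.symm.toEmbedding.trans (f.trans eβ.toEmbedding)
  have h : q ≤ p := by simpa using Fintype.card_le_of_embedding g
  have := Equiv.Perm.isMultiplyPretransitive (Fin p) q
  obtain ⟨σ, hσ⟩ := MulAction.exists_smul_eq (Equiv.Perm (Fin p)) (Fin.castLEEmb h) g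
  refine ⟨p, q, h, eα.symm, σ.trans eβ.symm, fun j => ?_⟩
  have hj : σ (Fin.castLE h j) = eβ (f (eα.symm j)) := DFunLike.congr_fun hσ j
  simp [hj]

lemma exists_adj_adj_of_isDissoc_compl_singleton (hT : T.Connected) (hc : IsDissoc T {c}ᶜ) {y : V}
    (hy : y ≠ c) (hcy : ¬ T.Adj c y) : ∃ m, T.Adj y m ∧ T.Adj c m := by
  obtain ⟨p, hp⟩ := hT.exists_isPath y c
  match p, hp with
  | .nil, _ => exact (hy rfl).elim
  | .cons h .nil, _ => exact (hcy h.symm).elim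
  | .cons (v := m) h (.cons (v := x) h' r), hp =>
    refine ⟨m, h, ?_⟩
    by_contra hcm
    have hm : m ≠ c := fun hmc => hcy (hmc ▸ h.symm)
    have hx : x ≠ c := fun hxc => hcm (hxc ▸ h'.symm)
    have hyx : y = x := hc.eq_of_adj hm hy hx h.symm h'
    simp [hyx] at hp

lemma not_adj_of_mem_neighborSet (hT : T.IsAcyclic) {a b : V} (hca : T.Adj c a)
    (hcb : T.Adj c b) : ¬ T.Adj a b := fun hab => by
  classical
  exact hT.cliqueFree le_rfl {c, a, b} (is3Clique_triple_iff.2 ⟨hca, hcb, hab⟩)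

lemma nonempty_iso_treeT_of_equiv {p q : ℕ} {h : q ≤ p} (eN : Fin p ≃ T.neighborSet c)
    (eQ : Fin q ≃ {y // y ≠ c ∧ ¬ T.Adj c y}) (hNN : ∀ i k, ¬ T.Adj (eN i) (eN k))
    (hQQ : ∀ j k, ¬ T.Adj (eQ j) (eQ k))
    (hNQ : ∀ i j, T.Adj (eN i) (eQ j) ↔ i = Fin.castLE h j) : Nonempty (T ≃g treeT p q h) := by
  let φ : Unit ⊕ Fin p ⊕ Fin q → V := Sum.elim (fun _ => c) (Sum.elim (fun i => eN i) fun j => eQ j)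
  have hcN (i) : T.Adj c (eN i) := (eN i).2
  have hcQ (j) : ¬ T.Adj c (eQ j) := (eQ j).2.2
  have hinj : Function.Injective φ := by
    refine .sumElim (Function.injective_of_subsingleton _) (.sumElim
      (Subtype.val_injective.comp eN.injective) (Subtype.val_injective.comp eQ.injective) ?_) ?_
    · exact fun i j hij => hcQ j (hij ▸ hcN i)
    · rintro _ (i | j)
      exacts [(hcN i).ne, (eQ j).2.1.symm]
  have hsurj : Function.Surjective φ := fun x => by
    by_cases hx : x = c
    · exact ⟨Sum.inl (), hx.symm⟩
    by_cases hcx : T.Adj c x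
    · exact ⟨Sum.inr (Sum.inl (eN.symm ⟨x, hcx⟩)), by simp [φ]⟩
    · exact ⟨Sum.inr (Sum.inr (eQ.symm ⟨x, hx, hcx⟩)), by simp [φ]⟩
  refine ⟨RelIso.symm ⟨Equiv.ofBijective φ ⟨hinj, hsurj⟩, ?_⟩⟩
  rintro (_ | i | i) (_ | k | k)
  · exact iff_of_false T.irrefl (treeT p q h).irrefl
  · exact iff_of_true (hcN k) (treeT_adj_center_neighbor k)
  · exact iff_of_false (hcQ k) (treeT_not_adj_center_pendant k)
  · exact iff_of_true (hcN i).symm (treeT_adj_center_neighbor i).symm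
  · exact iff_of_false (hNN i k) (treeT_not_adj_neighbor_neighbor i k)
  · exact (hNQ i k).trans (treeT_adj_neighbor_pendant_iff i k).symm
  · exact iff_of_false (hcQ i ·.symm) (treeT_not_adj_center_pendant i ·.symm)
  · rw [adj_comm, adj_comm (treeT _ _ _)]
    exact (hNQ k i).trans (treeT_adj_neighbor_pendant_iff k i).symm
  · exact iff_of_false (hQQ i k) (treeT_not_adj_pendant_pendant i k)

theorem exists_iso_treeT_of_isDissoc_compl_singleton [Finite V] (hT : T.IsTree)
    (hc : IsDissoc T {c}ᶜ) : ∃ (p q : ℕ) (h : q ≤ p), Nonempty (T ≃g treeT p q h) := by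
  have hparent (y : {y // y ≠ c ∧ ¬ T.Adj c y}) : ∃ m, T.Adj y m ∧ T.Adj c m :=
    exists_adj_adj_of_isDissoc_compl_singleton hT.connected hc y.2.1 y.2.2
  choose parent hadj hcparent using hparent
  have hinj : Function.Injective parent := fun y z hyz => Subtype.ext <|
    hc.eq_of_adj (hcparent y).ne' y.2.1 z.2.1 (hadj y).symm (hyz ▸ (hadj z).symm)
  obtain ⟨p, q, h, eQ, eN, heN⟩ := exists_equiv_equiv_castLE
    (⟨fun y => ⟨parent y, hcparent y⟩, fun _ _ hyz => hinj (Subtype.ext_iff.1 hyz)⟩ :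
      {y // y ≠ c ∧ ¬ T.Adj c y} ↪ T.neighborSet c)
  have hparent_unique (y : {y // y ≠ c ∧ ¬ T.Adj c y}) {x} (hx : x ≠ c) (hyx : T.Adj y x) :
      x = parent y :=
    hc.eq_of_adj y.2.1 hx (hcparent y).ne' hyx (hadj y)
  refine ⟨p, q, h, nonempty_iso_treeT_of_equiv eN eQ
    (fun i k => not_adj_of_mem_neighborSet hT.isAcyclic (eN i).2 (eN k).2)
    (fun j k hjk => (eQ k).2.2 (hparent_unique _ (eQ k).2.1 hjk ▸ hcparent (eQ j)))
    fun i j => ⟨fun hij => ?_, ?_⟩⟩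
  · exact eN.injective (Subtype.ext ((hparent_unique _ (T.ne_of_adj (eN i).2).symm hij.symm).trans
      (congrArg Subtype.val (heN j)).symm))
  · rintro rfl
    exact heN j ▸ (hadj (eQ j)).symm

end Classification

section Pendant

variable {V : Type*} {G T : SimpleGraph V} {S : Set V} {u v w : V}

/-- `u` is a pendant vertex of `G`, with `v` as its only neighbour. -/
def IsPendant (G : SimpleGraph V) (u v : V) : Prop :=
  ∀ y, G.Adj u y ↔ y = v

lemma IsPendant.adj (hu : IsPendant G u v) : G.Adj u v :=
  (hu v).2 rfl

lemma IsDissoc.insert_of_isPendant (hS : IsDissoc G S) (hu : IsPendant G u v)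
    (hv : v ∈ S → ∀ y ∈ S, ¬ G.Adj v y) : IsDissoc G (insert u S) := by
  have hadj {x a} (hx : x ∈ S) (ha : a ∈ insert u S) (hxa : G.Adj x a) (hxu : G.Adj x u) :
      a = u := by
    obtain rfl := (hu x).1 hxu.symm
    exact ha.resolve_right fun haS => hv hx a haS hxa
  rw [isDissoc_iff]
  rintro x (rfl | hx) a ha b hb hxa hxb
  · exact ((hu a).1 hxa).trans ((hu b).1 hxb).symm
  · rcases ha with rfl | ha
    · exact (hadj hx hb hxb hxa).symm
    rcases hb with rfl | hb
    · exact hadj hx (.inr ha) hxa hxb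
    · exact hS.eq_of_adj hx ha hb hxa hxb

lemma isPendant_of_forall_isPath_length_le (hT : T.IsAcyclic) {z x : V} {r : T.Walk v z}
    (hr : r.IsPath) (hmax : ∀ (a b : V) (p : T.Walk a b), p.IsPath → p.length ≤ r.length + 1)
    (hxv : T.Adj x v) (hx : x ∉ r.support) : IsPendant T x v := by
  refine fun y => ⟨fun hxy => ?_, fun hy => hy ▸ hxv⟩
  have hp : (Walk.cons hxv r).IsPath := (Walk.cons_isPath_iff _ _).2 ⟨hr, hx⟩
  by_cases hy : y ∈ (Walk.cons hxv r).support
  · simpa using hT.eq_snd_of_adj_start hp hxy hy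
  · have hlen := hmax _ _ (.cons hxy.symm (.cons hxv r)) ((Walk.cons_isPath_iff _ _).2 ⟨hp, hy⟩)
    simp at hlen

lemma exists_isPendant_twin_or_path [Finite V] (hT : T.IsAcyclic)
    (hd : ¬ IsDissoc T Set.univ) :
    (∃ v u u', u ≠ u' ∧ IsPendant T u v ∧ IsPendant T u' v) ∨
      ∃ u v w, u ≠ w ∧ IsPendant T u v ∧ ∀ y, T.Adj v y ↔ y = u ∨ y = w := by
  obtain ⟨o, a, b, hoa, hob, hab⟩ : ∃ o a b, T.Adj o a ∧ T.Adj o b ∧ a ≠ b := by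
    by_contra! hno
    exact hd (isDissoc_iff.2 fun o _ a _ b _ hoa hob => hno o a b hoa hob)
  have : Nonempty V := ⟨o⟩
  obtain ⟨u, z, p, hp, hmax⟩ := Walk.exists_isPath_forall_isPath_length_le_length T
  have hlen : 2 ≤ p.length :=
    hmax a b (.cons hoa.symm (.cons hob .nil)) (by simp [hoa.ne', hob.ne, hab])
  match p, hp with
  | .nil, _ => simp at hlen
  | .cons _ .nil, _ => simp at hlen
  | .cons (v := v) huv (.cons (v := w) hvw r), hp =>
    have hr : (Walk.cons hvw r).IsPath := hp.of_cons
    have hpendant (x) (hvx : T.Adj v x) (hxw : x ≠ w) : IsPendant T x v :=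
      isPendant_of_forall_isPath_length_le hT hr hmax hvx.symm fun hx =>
        hxw (by simpa using hT.eq_snd_of_adj_start hr hvx hx)
    have huw : u ≠ w := by
      rintro rfl
      simp at hp
    by_cases hx : ∃ x, T.Adj v x ∧ x ≠ u ∧ x ≠ w
    · obtain ⟨x, hvx, hxu, hxw⟩ := hx
      exact .inl ⟨v, u, x, hxu.symm, hpendant u huv.symm huw, hpendant x hvx hxw⟩
    · push Not at hx
      refine .inr ⟨u, v, w, huw, hpendant u huv.symm huw, fun y =>
        ⟨fun hvy => or_iff_not_imp_left.2 (hx y hvy), ?_⟩⟩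
      rintro (rfl | rfl)
      exacts [huv.symm, hvw]

end Pendant

section Reduction

variable {V : Type*} {G T : SimpleGraph V} {s S : Set V} {u v w x : V}

/-- The only vertex of `s` that can have neighbours outside `s` is `w`. -/
structure IsAttachedAt (G : SimpleGraph V) (s : Set V) (w : V) : Prop where
  mem : w ∈ s
  eq_of_adj : ∀ y ∈ s, ∀ z ∉ s, G.Adj y z → y = w

lemma IsAttachedAt.connected_induce (h : IsAttachedAt G s w) (hG : G.Connected) :
    (G.induce s).Connected := by
  classical
  let retract (v : V) : s := if hv : v ∈ s then ⟨v, hv⟩ else ⟨w, h.mem⟩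
  have hretract (v : s) : retract v = v := by simp [retract]
  have hadj (a b : V) (hab : G.Adj a b) :
      Relation.ReflTransGen (G.induce s).Adj (retract a) (retract b) := by
    by_cases ha : a ∈ s <;> by_cases hb : b ∈ s
    · simpa [retract, ha, hb] using .single (show (G.induce s).Adj ⟨a, ha⟩ ⟨b, hb⟩ from hab)
    · obtain rfl := h.eq_of_adj a ha b hb hab
      simp [retract, ha, hb, Relation.ReflTransGen.refl]
    · obtain rfl := h.eq_of_adj b hb a ha hab.symm
      simp [retract, ha, hb, Relation.ReflTransGen.refl]
    · simp [retract, ha, hb, Relation.ReflTransGen.refl]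
  refine connected_iff _ |>.2 ⟨fun a b => ?_, ⟨w, h.mem⟩⟩
  rw [← hretract a, ← hretract b, reachable_iff_reflTransGen]
  exact ((reachable_iff_reflTransGen _ _).1 (hG.preconnected a b)).lift' retract hadj

lemma IsAttachedAt.isDissoc_of_inter_of_diff (h : IsAttachedAt G s w) (hw : w ∉ S)
    (hin : IsDissoc G (S ∩ s)) (hout : IsDissoc G (S \ s)) : IsDissoc G S := by
  have hcross {y z} (hyS : y ∈ S) (hy : y ∈ s) (hz : z ∉ s) : ¬ G.Adj y z := fun hyz =>
    hw (h.eq_of_adj y hy z hz hyz ▸ hyS)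
  rw [isDissoc_iff]
  intro v hv a ha b hb hva hvb
  by_cases hvs : v ∈ s
  · have hmem {y} (hvy : G.Adj v y) : y ∈ s := by_contra fun hy => hcross hv hvs hy hvy
    exact hin.eq_of_adj ⟨hv, hvs⟩ ⟨ha, hmem hva⟩ ⟨hb, hmem hvb⟩ hva hvb
  · have hnotMem {y} (hy : y ∈ S) (hvy : G.Adj v y) : y ∉ s := fun hys =>
      hcross hy hys hvs hvy.symm
    exact hout.eq_of_adj ⟨hv, hvs⟩ ⟨ha, hnotMem ha hva⟩ ⟨hb, hnotMem hb hvb⟩ hva hvb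

/-- A step of the induction: `G` arises from `G.induce s` by attaching at `w` one or two vertices,
among them `x`, and each maximal dissociation set of `G.induce s` is the trace of one of `G` that
does not contain both `w` and `x`. -/
structure IsReduction (G : SimpleGraph V) (s : Set V) (w x : V) : Prop where
  isAttachedAt : IsAttachedAt G s w
  notMem : x ∉ s
  encard_compl_le : sᶜ.encard ≤ 2
  exists_extension : ∀ A : Set s, IsMaxDissoc (G.induce s) A →
    ∃ B, IsMaxDissoc G B ∧ Subtype.val ⁻¹' B = A ∧ ¬ (w ∈ B ∧ x ∈ B)

namespace IsReduction

lemma natCard_lt [Finite V] (h : IsReduction G s w x) : Nat.card s < Nat.card V := by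
  rw [Nat.card_coe_set_eq]
  exact Set.ncard_lt_card (Set.ne_univ_iff_exists_notMem s |>.2 ⟨x, h.notMem⟩)

lemma natCard_le [Finite V] (h : IsReduction G s w x) : Nat.card V ≤ Nat.card s + 2 := by
  rw [Nat.card_coe_set_eq, ← Set.ncard_add_ncard_compl s]
  gcongr
  exact ENat.toNat_le_of_le_natCast h.encard_compl_le

lemma isDissoc_of_preimage (h : IsReduction G s w x) (hw : w ∉ S)
    (hS : IsDissoc (G.induce s) (Subtype.val ⁻¹' S)) : IsDissoc G S := by
  refine h.isAttachedAt.isDissoc_of_inter_of_diff hw ?_ (isDissoc_of_encard_le_two ?_)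
  · rw [Set.inter_comm, ← Subtype.image_preimage_coe]
    exact hS.image (Embedding.induce s)
  · exact (Set.encard_le_encard fun _ hy => hy.2).trans h.encard_compl_le

lemma isDissoc_compl_of_isDissoc_induce_compl (h : IsReduction G s w x)
    (hs : IsDissoc (G.induce s) {⟨w, h.isAttachedAt.mem⟩}ᶜ) : IsDissoc G {w}ᶜ :=
  h.isDissoc_of_preimage (by simp) (hs.mono fun y hy hyw => hy (congrArg Subtype.val hyw))

lemma phi_induce_add_one_le [Finite V] (h : IsReduction G s w x) :
    phi (G.induce s) + 1 ≤ phi G := by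
  obtain ⟨S, hS, hwS, hxS⟩ := exists_isMaxDissoc_mem_mem (G := G) w x
  rw [← Set.ncard_singleton S]
  refine phi_add_ncard_le_of_forall_exists_preimage_eq Subtype.val {S} (by simpa) fun A hA => ?_
  obtain ⟨B, hB, hBA, hwx⟩ := h.exists_extension A hA
  refine ⟨B, hB, hBA, ?_⟩
  rintro rfl
  exact hwx ⟨hwS, hxS⟩

end IsReduction

lemma IsDissoc.isMaxDissoc_compl_pair {a b : V} (h : IsDissoc G {a, b}ᶜ)
    (ha : ¬ IsDissoc G {a}ᶜ) (hb : ¬ IsDissoc G {b}ᶜ) : IsMaxDissoc G {a, b}ᶜ := by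
  refine h.isMaxDissoc fun S hS hle z hzS hz => ?_
  rcases hz with rfl | rfl
  · refine hb (hS.mono fun y hy => ?_)
    by_cases hyz : y = z
    exacts [hyz ▸ hzS, hle (by simp_all)]
  · refine ha (hS.mono fun y hy => ?_)
    by_cases hyz : y = z
    exacts [hyz ▸ hzS, hle (by simp_all)]

lemma IsReduction.phi_induce_add_two_le [Finite V] (h : IsReduction G s w x)
    (hG : ∀ v, ¬ IsDissoc G {v}ᶜ) {c : s} (hc : IsDissoc (G.induce s) {c}ᶜ) :
    phi (G.induce s) + 2 ≤ phi G := by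
  obtain ⟨S, hS, hwS, hxS⟩ := exists_isMaxDissoc_mem_mem (G := G) w x
  let R : Set V := {↑c, w}ᶜ
  have hwR : w ∉ R := by simp [R]
  have hRc : Subtype.val ⁻¹' R ⊆ ({c}ᶜ : Set s) := fun y hy hyc => hy (.inl (congrArg _ hyc))
  have hR : IsMaxDissoc G R :=
    (h.isDissoc_of_preimage hwR (hc.mono hRc)).isMaxDissoc_compl_pair (hG c) (hG w)
  have hSR : S ≠ R := fun hSR => hwR (hSR ▸ hwS)
  rw [← Set.ncard_pair hSR]
  refine phi_add_ncard_le_of_forall_exists_preimage_eq Subtype.val {S, R}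
    (by simp [hS, hR]) fun A hA => ?_
  obtain ⟨B, hB, hBA, hwx⟩ := h.exists_extension A hA
  refine ⟨B, hB, hBA, ?_⟩
  rintro (hBS | hBR)
  · exact hwx ⟨hBS ▸ hwS, hBS ▸ hxS⟩
  · rw [hBR] at hBA
    have hAc : A = {c}ᶜ := hA.2 _ hc (hBA ▸ hRc)
    have hwc : (⟨w, h.isAttachedAt.mem⟩ : s) ∉ ({c}ᶜ : Set s) := hAc ▸ hBA ▸ hwR
    exact hG w (h.isDissoc_compl_of_isDissoc_induce_compl (not_not.1 hwc ▸ hc))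

lemma isReduction_of_isPendant_twin [Finite V] {u' : V} (huu' : u ≠ u') (hu : IsPendant G u v)
    (hu' : IsPendant G u' v) : IsReduction G {u}ᶜ v u where
  isAttachedAt := ⟨hu.adj.ne', fun y _ z hz hyz => (hu y).1 (not_not.1 hz ▸ hyz.symm)⟩
  notMem := by simp
  encard_compl_le := by simp
  exists_extension A hA := by
    obtain ⟨B, hle, hB⟩ := (hA.1.image (Embedding.induce {u}ᶜ)).exists_isMaxDissoc_superset
    have htrace := hA.preimage_eq _ hB.1 hle
    refine ⟨B, hB, htrace, fun ⟨hvB, huB⟩ => ?_⟩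
    have hv {y} (hy : y ∈ B) (hvy : G.Adj v y) : y = u :=
      hB.1.eq_of_adj hvB hy huB hvy hu.adj.symm
    have hd : IsDissoc G (insert u' (Embedding.induce (G := G) {u}ᶜ '' A)) := by
      refine (hA.1.image _).insert_of_isPendant hu' ?_
      rintro - _ ⟨y, hy, rfl⟩ hvy
      exact y.2 (hv (hle ⟨y, hy, rfl⟩) hvy)
    have hu'A : (⟨u', huu'.symm⟩ : ({u}ᶜ : Set V)) ∈ A := by
      rw [← hA.preimage_eq _ hd (Set.subset_insert _ _)]
      exact Set.mem_insert _ _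
    exact huu' (hv (hle ⟨_, hu'A, rfl⟩) hu'.adj.symm).symm

lemma isReduction_of_isPendant_path [Finite V] (huw : u ≠ w) (hu : IsPendant G u v)
    (hv : ∀ y, G.Adj v y ↔ y = u ∨ y = w) : IsReduction G {u, v}ᶜ w v where
  isAttachedAt := by
    have hvw : G.Adj v w := (hv w).2 (.inr rfl)
    refine ⟨by simp [huw.symm, hvw.ne'], fun y hy z hz hyz => ?_⟩
    have hy : y ≠ u ∧ y ≠ v := by simpa using hy
    rcases not_not.1 hz with rfl | rfl
    · exact (hy.2 ((hu y).1 hyz.symm)).elim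
    · exact ((hv y).1 hyz.symm).resolve_left hy.1
  notMem := by simp
  encard_compl_le := by
    rw [compl_compl]
    exact encard_pair_le_two u v
  exists_extension A hA := by
    have hd : IsDissoc G (insert u (Embedding.induce (G := G) {u, v}ᶜ '' A)) := by
      refine (hA.1.image _).insert_of_isPendant hu ?_
      rintro ⟨y, -, hyv⟩
      exact (y.2 (.inr hyv)).elim
    obtain ⟨B, hle, hB⟩ := hd.exists_isMaxDissoc_superset
    refine ⟨B, hB, hA.preimage_eq _ hB.1 ((Set.subset_insert _ _).trans hle), ?_⟩
    rintro ⟨hwB, hvB⟩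
    exact huw (hB.1.eq_of_adj hvB (hle (Set.mem_insert _ _)) hwB hu.adj.symm ((hv w).2 (.inr rfl)))

lemma exists_isReduction [Finite V] (hT : T.IsAcyclic) (hd : ¬ IsDissoc T Set.univ) :
    ∃ s w x, IsReduction T s w x := by
  obtain ⟨v, u, u', huu', hu, hu'⟩ | ⟨u, v, w, huw, hu, hv⟩ := exists_isPendant_twin_or_path hT hd
  · exact ⟨_, _, _, isReduction_of_isPendant_twin huu' hu hu'⟩
  · exact ⟨_, _, _, isReduction_of_isPendant_path huw hu hv⟩

end Reduction

section Bound

variable {p q : ℕ} {h : q ≤ p}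

lemma le_phi_treeT (hpq : 2 ≤ p + q) : (1 + p + q + 1) / 2 + 1 ≤ phi (treeT p q h) := by
  rw [phi_treeT hpq]
  split_ifs <;> omega

lemma phi_treeT_eq_iff (hpq : 2 ≤ p + q) :
    phi (treeT p q h) = (1 + p + q + 1) / 2 + 1 ↔ p ≤ q + 2 := by
  rw [phi_treeT hpq]
  split_ifs <;> omega

lemma IsReduction.three_lt_natCard {V : Type*} [Finite V] {G : SimpleGraph V} {s : Set V}
    {w x : V} (h : IsReduction G s w x) (hG : ∀ v, ¬ IsDissoc G {v}ᶜ) : 3 < Nat.card s := by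
  by_contra! hs
  refine hG w (h.isDissoc_compl_of_isDissoc_induce_compl (isDissoc_of_encard_le_two ?_))
  have hcompl := Set.ncard_add_ncard_compl (α := s) {⟨w, h.isAttachedAt.mem⟩}
  rw [Set.ncard_singleton] at hcompl
  rw [← (Set.toFinite _).cast_ncard_eq]
  exact_mod_cast (by omega : _ ≤ 2)

theorem lt_phi_of_forall_not_isDissoc_compl_singleton {V : Type*} [Finite V] {T : SimpleGraph V}
    (hT : T.IsTree) (hd : ∀ v, ¬ IsDissoc T {v}ᶜ) : (Nat.card V + 1) / 2 + 1 < phi T := by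
  induction hn : Nat.card V using Nat.strong_induction_on generalizing V with
  | _ n ih =>
  subst hn
  obtain ⟨s, w, x, hs⟩ := exists_isReduction hT.isAcyclic fun h =>
    hd hT.connected.nonempty.some (h.mono (Set.subset_univ _))
  have hTs : (T.induce s).IsTree :=
    ⟨hs.isAttachedAt.connected_induce hT.connected, hT.isAcyclic.induce s⟩
  have hlt := hs.natCard_lt
  have hle := hs.natCard_le
  by_cases hc : ∃ c, IsDissoc (T.induce s) {c}ᶜ
  · obtain ⟨c, hc⟩ := hc
    obtain ⟨p, q, h, ⟨e⟩⟩ := exists_iso_treeT_of_isDissoc_compl_singleton hTs hc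
    have hcard := natCard_eq_of_iso_treeT e
    have hs3 := hs.three_lt_natCard hd
    have hphi := hs.phi_induce_add_two_le hd hc
    have hbound := le_phi_treeT (h := h) (by omega)
    rw [phi_congr e] at hphi
    omega
  · push Not at hc
    have hbound := ih _ hlt hTs hc rfl
    have hphi := hs.phi_induce_add_one_le
    omega

theorem phi_eq_iff_exists_iso_treeT {V : Type*} [Finite V] {T : SimpleGraph V} (hT : T.IsTree)
    (hV : 3 ≤ Nat.card V) :
    phi T = (Nat.card V + 1) / 2 + 1 ↔
      ∃ (p q : ℕ) (h : q ≤ p), p ≤ q + 2 ∧ Nonempty (T ≃g treeT p q h) := by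
  have hiff {p q : ℕ} {h : q ≤ p} (e : T ≃g treeT p q h) :
      phi T = (Nat.card V + 1) / 2 + 1 ↔ p ≤ q + 2 := by
    have hcard := natCard_eq_of_iso_treeT e
    rw [phi_congr e, hcard, phi_treeT_eq_iff (by omega)]
  refine ⟨fun hphi => ?_, fun ⟨_, _, _, hpq, ⟨e⟩⟩ => (hiff e).2 hpq⟩
  obtain ⟨c, hc⟩ : ∃ c, IsDissoc T {c}ᶜ := by
    by_contra! hd
    exact (lt_phi_of_forall_not_isDissoc_compl_singleton hT hd).ne' hphi
  obtain ⟨p, q, h, ⟨e⟩⟩ := exists_iso_treeT_of_isDissoc_compl_singleton hT hc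
  exact ⟨p, q, h, (hiff e).1 hphi, ⟨e⟩⟩

end Bound

/-- a tree `T` of order `n ≥ 3` satisfies `phi T = ⌈n/2⌉ + 1` iff `n` is even
and `T ≅ T(n/2, (n-2)/2)`, or `n` is odd and `T ≅ T((n-1)/2, (n-1)/2)` or
`T ≅ T((n+1)/2, (n-3)/2)`. -/
theorem stmt5 {V : Type*} [Fintype V] (T : SimpleGraph V) (n : ℕ) (hn : 3 ≤ n)
    (hcard : Fintype.card V = n) (hT : T.IsTree) :
    phi T = (n + 1) / 2 + 1 ↔
      (Even n ∧ Nonempty (T ≃g treeT (n / 2) ((n - 2) / 2) (by omega))) ∨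
      (Odd n ∧ (Nonempty (T ≃g treeT ((n - 1) / 2) ((n - 1) / 2) le_rfl) ∨
        Nonempty (T ≃g treeT ((n + 1) / 2) ((n - 3) / 2) (by omega)))) := by
  rw [Fintype.card_eq_nat_card] at hcard
  subst hcard
  rw [phi_eq_iff_exists_iso_treeT hT hn]
  constructor
  · rintro ⟨p, q, h, hpq, ⟨e⟩⟩
    have hcard := natCard_eq_of_iso_treeT e
    obtain hpq | hpq | hpq : p = q ∨ p = q + 1 ∨ p = q + 2 := by omega
    · obtain rfl : p = (Nat.card V - 1) / 2 := by omega
      obtain rfl : q = (Nat.card V - 1) / 2 := by omega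
      exact .inr ⟨Nat.odd_iff.2 (by omega), .inl ⟨e⟩⟩
    · obtain rfl : p = Nat.card V / 2 := by omega
      obtain rfl : q = (Nat.card V - 2) / 2 := by omega
      exact .inl ⟨Nat.even_iff.2 (by omega), ⟨e⟩⟩
    · obtain rfl : p = (Nat.card V + 1) / 2 := by omega
      obtain rfl : q = (Nat.card V - 3) / 2 := by omega
      exact .inr ⟨Nat.odd_iff.2 (by omega), .inr ⟨e⟩⟩
  · rintro (⟨-, e⟩ | ⟨-, e | e⟩)
    all_goals exact ⟨_, _, _, by omega, e⟩
end

section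
/- For every n ≥ 3, the cycle satisfies φ(C_n) ≥ ⌊n/2⌋ + 2, with equality if and only if n = 3 or n = 6. -/
open SimpleGraph

/-!
The words `(110)^q (10)^r` with `q, r ≥ 1`, read around `C_n` with `n = 3q + 2r`, have no three
consecutive ones and no two consecutive zeros, so they encode maximal dissociation sets. Vertex `0`
is the only place where a block `10` is followed by a block `110`, so such a set has trivial
stabilizer under rotation and its orbit already provides `n` maximal dissociation sets. Every
`n ≥ 5` other than `6` is of this form, and `n > ⌊n/2⌋ + 2` for `n ≥ 5`; the cycles `C_3`, `C_4` and
`C_6` are enumerated.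
-/

section General

variable {V W : Type*} {G : SimpleGraph V} {H : SimpleGraph W} {S T : Set V}

lemma IsDissoc.subset (hT : IsDissoc G T) (hST : S ⊆ T) : IsDissoc G S :=
  fun v hv => (hT v (hST hv)).anti fun _ hu => ⟨hST hu.1, hu.2⟩

lemma isMaxDissoc_iff_forall_insert :
    IsMaxDissoc G S ↔ IsDissoc G S ∧ ∀ v ∉ S, ¬ IsDissoc G (insert v S) := by
  rw [← Set.maximal_iff_forall_insert fun _ _ hT hST => hT.subset hST, maximal_iff]
  rfl

lemma IsDissoc.isMaxDissoc_of_nontrivial (hS : IsDissoc G S)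
    (h : ∀ v ∉ S, {u | u ∈ S ∧ G.Adj v u}.Nontrivial) : IsMaxDissoc G S := by
  refine isMaxDissoc_iff_forall_insert.2 ⟨hS, fun v hv hins => ?_⟩
  refine (h v hv).not_subsingleton ((hins v (Set.mem_insert v S)).anti ?_)
  exact fun u hu => ⟨Set.mem_insert_of_mem v hu.1, hu.2⟩

lemma IsDissoc.image_iso (e : G ≃g H) (hS : IsDissoc G S) : IsDissoc H (e '' S) := by
  rintro _ ⟨v, hv, rfl⟩ _ ⟨⟨x, hx, rfl⟩, hvx⟩ _ ⟨⟨y, hy, rfl⟩, hvy⟩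
  exact congrArg e (hS v hv ⟨hx, e.map_adj_iff.1 hvx⟩ ⟨hy, e.map_adj_iff.1 hvy⟩)

lemma IsMaxDissoc.image_iso (e : G ≃g H) (hS : IsMaxDissoc G S) : IsMaxDissoc H (e '' S) := by
  refine ⟨hS.1.image_iso e, fun T hT hST => ?_⟩
  have hS_eq : S = e.symm '' T :=
    hS.2 _ (hT.image_iso e.symm) fun v hv => ⟨e v, hST ⟨v, hv, rfl⟩, e.symm_apply_apply v⟩
  rw [hS_eq, Set.image_image]
  simp

end General

section Action

open scoped Pointwise

variable {Γ V : Type*} [AddGroup Γ] [AddAction Γ V] {G : SimpleGraph V} {S : Set V}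

lemma IsMaxDissoc.vadd (hG : ∀ (g : Γ) (u v : V), G.Adj (g +ᵥ u) (g +ᵥ v) ↔ G.Adj u v)
    (hS : IsMaxDissoc G S) (g : Γ) : IsMaxDissoc G (g +ᵥ S) :=
  hS.image_iso ⟨AddAction.toPerm g, hG g _ _⟩

lemma IsMaxDissoc.index_stabilizer_le_phi [Finite V]
    (hG : ∀ (g : Γ) (u v : V), G.Adj (g +ᵥ u) (g +ᵥ v) ↔ G.Adj u v) (hS : IsMaxDissoc G S) :
    (AddAction.stabilizer Γ S).index ≤ phi G := by
  rw [AddAction.index_stabilizer]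
  refine Set.ncard_le_ncard ?_
  rintro _ ⟨g, rfl⟩
  exact hS.vadd hG g

end Action

section Decidable

variable {V : Type*} [DecidableEq V] (G : SimpleGraph V) [DecidableRel G.Adj]

instance decidableIsDissoc (S : Finset V) : Decidable (IsDissoc G S) :=
  decidable_of_iff (∀ v ∈ S, ∀ x ∈ S, G.Adj v x → ∀ y ∈ S, G.Adj v y → x = y) <| by
    simp [IsDissoc, Set.Subsingleton]

instance decidableIsMaxDissoc [Fintype V] (S : Finset V) : Decidable (IsMaxDissoc G S) :=
  decidable_of_iff (IsDissoc G S ∧ ∀ v ∉ S, ¬ IsDissoc G ↑(insert v S)) <| by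
    simp [isMaxDissoc_iff_forall_insert]

lemma phi_eq_card_filter [Fintype V] :
    phi G = (Finset.univ.filter fun S : Finset V => IsMaxDissoc G S).card := by
  rw [phi, ← Set.ncard_coe_finset, ← Set.ncard_image_of_injective _ Finset.coe_injective]
  congr 1
  ext S
  refine ⟨fun hS => ⟨S.toFinite.toFinset, ?_, ?_⟩, ?_⟩
  · simpa using hS
  · simp
  · rintro ⟨T, hT, rfl⟩
    simpa using hT

end Decidable

section Cycle

open scoped Pointwise

lemma phi_cycleGraph_three : phi (cycleGraph 3) = 3 := by
  have h : (Finset.univ.filter fun S : Finset (Fin 3) => IsMaxDissoc (cycleGraph 3) S) =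
      Finset.powersetCard 2 Finset.univ := by
    decide
  rw [phi_eq_card_filter, h]
  rfl

lemma phi_cycleGraph_four : phi (cycleGraph 4) = 6 := by
  have h : (Finset.univ.filter fun S : Finset (Fin 4) => IsMaxDissoc (cycleGraph 4) S) =
      Finset.powersetCard 2 Finset.univ := by
    decide
  rw [phi_eq_card_filter, h]
  rfl

lemma phi_cycleGraph_six : phi (cycleGraph 6) = 5 := by
  have h : (Finset.univ.filter fun S : Finset (Fin 6) => IsMaxDissoc (cycleGraph 6) S) =
      {{0, 1, 3, 4}, {1, 2, 4, 5}, {2, 3, 5, 0}, {0, 2, 4}, {1, 3, 5}} := by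
    decide +kernel
  rw [phi_eq_card_filter, h]
  rfl

variable {n q r : ℕ}

lemma cycleGraph_adj_iff_val (hn : 2 ≤ n) {u v : Fin n} :
    (cycleGraph n).Adj u v ↔ u.val + 1 = v ∨ v.val + 1 = u ∨
      (u.val = 0 ∧ v.val + 1 = n) ∨ (v.val = 0 ∧ u.val + 1 = n) := by
  have huv := Fin.intCast_val_sub_eq_sub_add_ite u v
  have hvu := Fin.intCast_val_sub_eq_sub_add_ite v u
  rw [cycleGraph_adj']
  simp only [Fin.le_def] at huv hvu
  split_ifs at huv hvu <;> omega

lemma cycleGraph_adj_vadd [NeZero n] (k u v : Fin n) :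
    (cycleGraph n).Adj (k +ᵥ u) (k +ᵥ v) ↔ (cycleGraph n).Adj u v := by
  simp only [cycleGraph_adj', vadd_eq_add, add_sub_add_left_eq_sub]

/-- The vertex set of `C_n` encoded by the word `(110)^q (10)^r`, where `n = 3 * q + 2 * r`: the
witness whose rotations are counted. The length `n` is an independent parameter so that the set
lives on `Fin n` itself. -/
def blockSet (n q : ℕ) : Set (Fin n) :=
  {v | (v.val < 3 * q ∧ v.val % 3 ≠ 2) ∨ (3 * q ≤ v.val ∧ (v.val - 3 * q) % 2 = 0)}

lemma mem_blockSet {v : Fin n} : v ∈ blockSet n q ↔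
    (v.val < 3 * q ∧ v.val % 3 ≠ 2) ∨ (3 * q ≤ v.val ∧ (v.val - 3 * q) % 2 = 0) :=
  Iff.rfl

lemma isDissoc_blockSet (hq : 1 ≤ q) (hn : n = 3 * q + 2 * r) :
    IsDissoc (cycleGraph n) (blockSet n q) := by
  rintro v hv x ⟨hx, hvx⟩ y ⟨hy, hvy⟩
  rw [cycleGraph_adj_iff_val (by omega)] at hvx hvy
  rw [mem_blockSet] at hv hx hy
  ext
  obtain rfl | hr : r = 0 ∨ 1 ≤ r := by omega
  all_goals omega

lemma isMaxDissoc_blockSet (hq : 1 ≤ q) (hn : n = 3 * q + 2 * r) :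
    IsMaxDissoc (cycleGraph n) (blockSet n q) := by
  refine (isDissoc_blockSet hq hn).isMaxDissoc_of_nontrivial fun v hv => ?_
  rw [mem_blockSet] at hv
  obtain ⟨pred, hpred⟩ : ∃ u : Fin n, u.val + 1 = v :=
    ⟨⟨v - 1, by omega⟩, Nat.sub_add_cancel (by omega)⟩
  obtain ⟨succ, hsucc⟩ : ∃ u : Fin n, u.val = v + 1 ∨ (u.val = 0 ∧ v.val + 1 = n) := by
    by_cases hlast : v.val + 1 = n
    · exact ⟨⟨0, by omega⟩, .inr ⟨rfl, hlast⟩⟩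
    · exact ⟨⟨v + 1, by omega⟩, .inl rfl⟩
  refine ⟨pred, ⟨?_, ?_⟩, succ, ⟨?_, ?_⟩, ?_⟩
  · rw [mem_blockSet]; omega
  · rw [cycleGraph_adj_iff_val (by omega)]; omega
  · rw [mem_blockSet]; omega
  · rw [cycleGraph_adj_iff_val (by omega)]; omega
  · rw [Ne, Fin.ext_iff]; omega

lemma zero_mem_blockSet [NeZero n] (hq : 1 ≤ q) : 0 ∈ blockSet n q := by
  rw [mem_blockSet, Fin.val_zero]
  omega

lemma one_mem_blockSet [NeZero n] (hq : 1 ≤ q) (hn : 1 < n) : 1 ∈ blockSet n q := by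
  have hone : (1 : Fin n).val = 1 := Nat.mod_eq_of_lt hn
  rw [mem_blockSet, hone]
  omega

/-- `k` and `k + 1` lie in the set exactly when a block `110` starts at `k`; only at `k = 0` is that
block preceded by a block `10`. -/
lemma sub_three_mem_blockSet_iff [NeZero n] (hq : 1 ≤ q) (hr : 1 ≤ r) (hn : n = 3 * q + 2 * r)
    {k : Fin n} (h₀ : k ∈ blockSet n q) (h₁ : k + 1 ∈ blockSet n q) :
    k - 3 ∈ blockSet n q ↔ k ≠ 0 := by
  have hone : (1 : Fin n).val = 1 := Nat.mod_eq_of_lt (show 1 < n by omega)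
  have hthree : (3 : Fin n).val = 3 := Nat.mod_eq_of_lt (show 3 < n by omega)
  have hadd := Fin.val_add_eq_ite k 1
  have hsub := Fin.intCast_val_sub_eq_sub_add_ite k 3
  simp only [Fin.le_def, hone, hthree] at hadd hsub
  rw [mem_blockSet] at h₀ h₁
  rw [mem_blockSet, ← Fin.val_ne_zero_iff]
  obtain rfl | hr₂ : r = 1 ∨ 2 ≤ r := by omega
  all_goals split_ifs at hadd hsub <;> omega

lemma stabilizer_blockSet [NeZero n] (hq : 1 ≤ q) (hr : 1 ≤ r) (hn : n = 3 * q + 2 * r) :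
    AddAction.stabilizer (Fin n) (blockSet n q) = ⊥ := by
  refine (AddSubgroup.eq_bot_iff_forall _).2 fun k hk => ?_
  have hk_mem (i : Fin n) : k + i ∈ blockSet n q ↔ i ∈ blockSet n q :=
    AddAction.mem_stabilizer_set.1 hk i
  have hzero : (0 : Fin n) ∈ blockSet n q := zero_mem_blockSet hq
  have hone : (1 : Fin n) ∈ blockSet n q := one_mem_blockSet hq (by omega)
  have hk_zero : k ∈ blockSet n q := by simpa using (hk_mem 0).2 hzero
  have hsub : k - 3 ∈ blockSet n q ↔ (0 : Fin n) - 3 ∈ blockSet n q := by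
    rw [sub_eq_add_neg, hk_mem, zero_sub]
  rw [sub_three_mem_blockSet_iff hq hr hn hk_zero ((hk_mem 1).2 hone),
    sub_three_mem_blockSet_iff hq hr hn hzero (by rwa [zero_add])] at hsub
  simpa using hsub

lemma le_phi_cycleGraph_of_eq_add (hq : 1 ≤ q) (hr : 1 ≤ r) (hn : n = 3 * q + 2 * r) :
    n ≤ phi (cycleGraph n) := by
  have : NeZero n := ⟨by omega⟩
  have h := (isMaxDissoc_blockSet hq hn).index_stabilizer_le_phi cycleGraph_adj_vadd
  rwa [stabilizer_blockSet hq hr hn, AddSubgroup.index_bot, Nat.card_fin] at h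

lemma le_phi_cycleGraph (hn : 5 ≤ n) (hn6 : n ≠ 6) : n ≤ phi (cycleGraph n) := by
  obtain ⟨q, r, hq, hr, h⟩ : ∃ q r, 1 ≤ q ∧ 1 ≤ r ∧ n = 3 * q + 2 * r := by
    obtain h | h | h : n % 3 = 0 ∨ n % 3 = 1 ∨ n % 3 = 2 := by omega
    · exact ⟨n / 3 - 2, 3, by omega, by omega, by omega⟩
    · exact ⟨n / 3 - 1, 2, by omega, by omega, by omega⟩
    · exact ⟨n / 3, 1, by omega, by omega, by omega⟩
  exact le_phi_cycleGraph_of_eq_add hq hr h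

end Cycle

/-- for `n ≥ 3`, `φ(C_n) ≥ ⌊n/2⌋ + 2`, with equality iff `n = 3` or `n = 6`. -/
theorem stmt13 (n : ℕ) (hn : 3 ≤ n) :
    n / 2 + 2 ≤ phi (cycleGraph n) ∧
      (phi (cycleGraph n) = n / 2 + 2 ↔ n = 3 ∨ n = 6) := by
  obtain rfl | rfl | rfl | ⟨h5, h6⟩ : n = 3 ∨ n = 4 ∨ n = 6 ∨ 5 ≤ n ∧ n ≠ 6 := by omega
  · simp [phi_cycleGraph_three]
  · simp [phi_cycleGraph_four]
  · simp [phi_cycleGraph_six]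
  · have hle := le_phi_cycleGraph h5 h6
    omega
end
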